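/- arXiv:2109.09043 — 3 statements merged into one kernel-verified Lean document; each statement's English description precedes it below -/
import Mathlib

section
/- For all real numbers a, b and all σ > 0, the Gaussian smoothing identity ∫_ℝ Φ((a − b·x)/σ) · φ(x) dx = Φ(a/√(σ² + b²)) holds, where the integral is with respect to Lebesgue measure on ℝ. -/
open MeasureTheory ProbabilityTheory

/-- The cumulative distribution function `Φ` of the standard normal distribution. -/
noncomputable def stdNormalCDF (x : ℝ) : ℝ :=
  ((gaussianReal 0 1) (Set.Iic x)).toReal

/-- The density `φ` of the standard normal distribution. -/
noncomputable def stdNormalPDF (x : ℝ) : ℝ :=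
  Real.exp (-x ^ 2 / 2) / Real.sqrt (2 * Real.pi)

/-!
Let `X` and `Z` be independent standard normal variables. Conditionally on `X = x`, the event
`b X + σ Z ≤ a` has probability `Φ((a - b x) / σ)`, so the integral is `P(b X + σ Z ≤ a)`. Since
`b X + σ Z` is centred normal with variance `b² + σ²`, this probability is `Φ(a / √(σ² + b²))`.
-/

open scoped NNReal

lemma conv_apply {M : Type*} [AddMonoid M] [MeasurableSpace M] [MeasurableAdd₂ M]
    (μ ν : Measure M) [SFinite ν] {s : Set M} (hs : MeasurableSet s) :
    (μ ∗ ν) s = ∫⁻ x, ν ((x + ·) ⁻¹' s) ∂μ := by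
  rw [Measure.conv, Measure.map_apply measurable_add hs, Measure.prod_apply (measurable_add hs)]
  rfl

lemma cdf_conv (μ ν : Measure ℝ) [IsProbabilityMeasure μ] [IsProbabilityMeasure ν] (a : ℝ) :
    cdf (μ ∗ ν) a = ∫ x, cdf ν (a - x) ∂μ := by
  have hmeas : Measurable fun x ↦ cdf ν (a - x) :=
    (monotone_cdf ν).measurable.comp (measurable_const.sub measurable_id)
  have hslice (x : ℝ) : (x + ·) ⁻¹' Set.Iic a = Set.Iic (a - x) :=
    Set.preimage_const_add_Iic x a
  rw [integral_eq_lintegral_of_nonneg_ae (.of_forall fun x ↦ cdf_nonneg ν (a - x))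
    hmeas.aestronglyMeasurable]
  simp only [cdf_eq_real (μ ∗ ν), measureReal_def, conv_apply μ ν measurableSet_Iic, hslice,
    ofReal_cdf]

lemma stdNormalCDF_eq_cdf : stdNormalCDF = cdf (gaussianReal 0 1) :=
  funext fun x ↦ (cdf_eq_real _ x).symm

lemma measurable_stdNormalCDF : Measurable stdNormalCDF :=
  stdNormalCDF_eq_cdf ▸ (monotone_cdf _).measurable

lemma stdNormalPDF_eq_gaussianPDFReal : stdNormalPDF = gaussianPDFReal 0 1 := by
  ext x
  simp [stdNormalPDF, gaussianPDFReal, div_eq_inv_mul]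

lemma integral_mul_stdNormalPDF (f : ℝ → ℝ) :
    ∫ x, f x * stdNormalPDF x = ∫ x, f x ∂gaussianReal 0 1 := by
  simp only [integral_gaussianReal_eq_integral_smul one_ne_zero, smul_eq_mul,
    stdNormalPDF_eq_gaussianPDFReal, mul_comm]

lemma gaussianReal_map_standardize (m : ℝ) {v : ℝ≥0} (hv : v ≠ 0) :
    (gaussianReal m v).map (fun x ↦ (x - m) / √v) = gaussianReal 0 1 := by
  have hvar : v / .mk (√(v : ℝ) ^ 2) (sq_nonneg _) = 1 := by
    ext
    simp [hv]
  calc (gaussianReal m v).map (fun x ↦ (x - m) / √v)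
      = ((gaussianReal m v).map (· - m)).map (· / √(v : ℝ)) := by
        rw [Measure.map_map (by fun_prop) (by fun_prop), Function.comp_def]
    _ = gaussianReal 0 1 := by
        rw [gaussianReal_map_sub_const, gaussianReal_map_div_const, sub_self, zero_div, hvar]

lemma cdf_gaussianReal (m : ℝ) {v : ℝ≥0} (hv : v ≠ 0) (x : ℝ) :
    cdf (gaussianReal m v) x = stdNormalCDF ((x - m) / √v) := by
  have hsqrt : 0 < √(v : ℝ) := Real.sqrt_pos.mpr (NNReal.coe_pos.mpr hv.bot_lt)
  have hpre : (fun y ↦ (y - m) / √(v : ℝ)) ⁻¹' Set.Iic ((x - m) / √v) = Set.Iic x := by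
    ext y
    simp [div_le_div_iff_of_pos_right hsqrt]
  rw [cdf_eq_real, measureReal_def, stdNormalCDF, ← gaussianReal_map_standardize m hv,
    Measure.map_apply (by fun_prop) measurableSet_Iic, hpre]

lemma integral_stdNormalCDF_gaussianReal (m : ℝ) (v : ℝ≥0) {w : ℝ≥0} (hw : w ≠ 0) (a : ℝ) :
    ∫ x, stdNormalCDF ((a - x) / √w) ∂gaussianReal m v =
      stdNormalCDF ((a - m) / √(v + w)) := by
  calc ∫ x, stdNormalCDF ((a - x) / √w) ∂gaussianReal m v
      = ∫ x, cdf (gaussianReal 0 w) (a - x) ∂gaussianReal m v := by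
        simp only [cdf_gaussianReal 0 hw, sub_zero]
    _ = cdf (gaussianReal m v ∗ gaussianReal 0 w) a := (cdf_conv _ _ a).symm
    _ = cdf (gaussianReal m (v + w)) a := by rw [gaussianReal_conv_gaussianReal, add_zero]
    _ = stdNormalCDF ((a - m) / √(v + w)) := by
        rw [cdf_gaussianReal m (by simp [hw]), NNReal.coe_add]

/-- Gaussian smoothing identity: for all `a b : ℝ` and `σ > 0`,
`∫ Φ((a − b·x)/σ) φ(x) dx = Φ(a/√(σ² + b²))`. -/
theorem gaussian_smoothing_identity (a b σ : ℝ) (hσ : 0 < σ) :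
    ∫ x : ℝ, stdNormalCDF ((a - b * x) / σ) * stdNormalPDF x =
      stdNormalCDF (a / Real.sqrt (σ ^ 2 + b ^ 2)) := by
  let v : ℝ≥0 := .mk (b ^ 2) (sq_nonneg b)
  let w : ℝ≥0 := .mk (σ ^ 2) (sq_nonneg σ)
  have hw : w ≠ 0 := NNReal.coe_ne_zero.mp (pow_pos hσ 2).ne'
  have hsqrt : √(w : ℝ) = σ := Real.sqrt_sq hσ.le
  have hmeas : Measurable fun y ↦ stdNormalCDF ((a - y) / √w) :=
    measurable_stdNormalCDF.comp (by fun_prop)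
  calc ∫ x : ℝ, stdNormalCDF ((a - b * x) / σ) * stdNormalPDF x
      = ∫ x, stdNormalCDF ((a - b * x) / √w) ∂gaussianReal 0 1 := by
        rw [integral_mul_stdNormalPDF, hsqrt]
    _ = ∫ y, stdNormalCDF ((a - y) / √w) ∂(gaussianReal 0 1).map (b * ·) :=
        (integral_map (by fun_prop) hmeas.aestronglyMeasurable).symm
    _ = ∫ y, stdNormalCDF ((a - y) / √w) ∂gaussianReal 0 v := by
        rw [gaussianReal_map_const_mul, mul_zero, mul_one]
    _ = stdNormalCDF ((a - 0) / √(v + w)) := integral_stdNormalCDF_gaussianReal 0 v hw a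
    _ = stdNormalCDF (a / √(σ ^ 2 + b ^ 2)) := by rw [sub_zero, add_comm]; rfl
end

section
/- (Identification under CL(1).) Fix an integer K ≥ 3. Let (c₂,…,c_K, δ₁,…,δ_K, γ₁,…,γ_K) and (c'₂,…,c'_K, δ'₁,…,δ'_K, γ'₁,…,γ'_K) be two parameter vectors with γ_l > 0 and γ'_l > 0 for all l ∈ {1,…,K}, with strictly increasing thresholds c₂ < c₃ < ⋯ < c_K, and satisfying the identifying constraints c₂ = c'₂ = 0 and γ₁ = γ'₁ = 1. If the identifying functions agree, i.e. (c_k − δ_l)/γ_l = (c'_k − δ'_l)/γ'_l for all k ∈ {2,…,K} and all l ∈ {1,…,K}, then the two parameter vectors are equal: c_k = c'_k for all k ∈ {2,…,K}, δ_l = δ'_l and γ_l = γ'_l for all l ∈ {1,…,K}. -/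
/-!
Within a row `j`, differences of the identifying functions do not involve the intercept: they are
`(c i - c i₀) / γ j`. In the reference row the volatility is known, so these differences determine
the thresholds. In every other row, one nonzero difference of thresholds then determines the
volatility, after which a single entry of the row determines the intercept.
-/

section DivisionRing

variable {F : Type*} [DivisionRing F]

theorem sub_div_eq_sub_div_of_standardized_eq {x y x' y' a b a' b' : F}
    (hx : (x - b) / a = (x' - b') / a') (hy : (y - b) / a = (y' - b') / a') :
    (x - y) / a = (x' - y') / a' := by
  rw [← sub_sub_sub_cancel_right x y b, ← sub_sub_sub_cancel_right x' y' b', sub_div, hx, hy,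
    ← sub_div]

theorem sub_eq_sub_of_standardized_eq {x y x' y' a b b' : F} (ha : a ≠ 0)
    (hx : (x - b) / a = (x' - b') / a) (hy : (y - b) / a = (y' - b') / a) :
    x - y = x' - y' :=
  (div_left_inj' ha).mp (sub_div_eq_sub_div_of_standardized_eq hx hy)

theorem scale_eq_of_standardized_eq {x y a b a' b' : F} (hxy : x ≠ y)
    (hx : (x - b) / a = (x - b') / a') (hy : (y - b) / a = (y - b') / a') :
    a = a' := by
  have hslope := sub_div_eq_sub_div_of_standardized_eq hx hy
  rw [div_eq_mul_inv, div_eq_mul_inv] at hslope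
  exact inv_injective (mul_left_cancel₀ (sub_ne_zero.mpr hxy) hslope)

theorem location_eq_of_standardized_eq {x a b b' : F} (ha : a ≠ 0)
    (hx : (x - b) / a = (x - b') / a) : b = b' :=
  sub_right_injective ((div_left_inj' ha).mp hx)

theorem cl1_identification_general {ι κ : Type*} {s : Set ι} {t : Set κ}
    {c c' : ι → F} {δ γ δ' γ' : κ → F} {i₀ i₁ : ι} {j₀ : κ}
    (hi₀ : i₀ ∈ s) (hi₁ : i₁ ∈ s) (hj₀ : j₀ ∈ t)
    (hγ : ∀ j ∈ t, γ j ≠ 0) (hγ' : ∀ j ∈ t, γ' j ≠ 0) (hne : c i₁ ≠ c i₀)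
    (hc₀ : c i₀ = c' i₀) (hγ₀ : γ j₀ = γ' j₀)
    (hagree : ∀ i ∈ s, ∀ j ∈ t, (c i - δ j) / γ j = (c' i - δ' j) / γ' j) :
    Set.EqOn c c' s ∧ Set.EqOn δ δ' t ∧ Set.EqOn γ γ' t := by
  have thresholds_eq : Set.EqOn c c' s := by
    intro i hi
    have hrow : ∀ k ∈ s, (c k - δ j₀) / γ j₀ = (c' k - δ' j₀) / γ j₀ := fun k hk => by
      rw [hagree k hk j₀ hj₀, hγ₀]
    have hspacing := sub_eq_sub_of_standardized_eq (hγ j₀ hj₀) (hrow i hi) (hrow i₀ hi₀)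
    rwa [hc₀, sub_left_inj] at hspacing
  have hagree' : ∀ i ∈ s, ∀ j ∈ t, (c i - δ j) / γ j = (c i - δ' j) / γ' j := fun i hi j hj => by
    rw [hagree i hi j hj, thresholds_eq hi]
  have volatilities_eq : Set.EqOn γ γ' t := fun j hj =>
    scale_eq_of_standardized_eq hne (hagree' i₁ hi₁ j hj) (hagree' i₀ hi₀ j hj)
  have intercepts_eq : Set.EqOn δ δ' t := fun j hj =>
    location_eq_of_standardized_eq (hγ' j hj) (volatilities_eq hj ▸ hagree' i₀ hi₀ j hj)
  exact ⟨thresholds_eq, intercepts_eq, volatilities_eq⟩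

end DivisionRing

/-- **Identification under CL(1).** Under the normalization `c₂ = 0`,
`γ₁ = 1`, the identifying functions `(k, l) ↦ (c_k − δ_l)/γ_l` determine the thresholds
`c₂, …, c_K`, the intercepts `δ₁, …, δ_K` and the volatilities `γ₁, …, γ_K`. -/
theorem cl1_identification
    (K : ℕ) (hK : 3 ≤ K)
    (c δ γ c' δ' γ' : ℕ → ℝ)
    (hγ : ∀ l, 1 ≤ l → l ≤ K → 0 < γ l)
    (hγ' : ∀ l, 1 ≤ l → l ≤ K → 0 < γ' l)
    (hcmono : ∀ k, 2 ≤ k → k < K → c k < c (k + 1))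
    (hc2 : c 2 = 0) (hc2' : c' 2 = 0)
    (hγ1 : γ 1 = 1) (hγ1' : γ' 1 = 1)
    (hagree : ∀ k l, 2 ≤ k → k ≤ K → 1 ≤ l → l ≤ K →
      (c k - δ l) / γ l = (c' k - δ' l) / γ' l) :
    (∀ k, 2 ≤ k → k ≤ K → c k = c' k) ∧
      (∀ l, 1 ≤ l → l ≤ K → δ l = δ' l) ∧
      (∀ l, 1 ≤ l → l ≤ K → γ l = γ' l) := by
  have hc : c 3 ≠ c 2 := (hcmono 2 le_rfl hK).ne'
  simpa only [Set.EqOn, Set.mem_Icc, and_imp] using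
    cl1_identification_general (s := Set.Icc 2 K) (t := Set.Icc 1 K) (i₀ := 2) (i₁ := 3) (j₀ := 1)
      ⟨le_rfl, by lia⟩ ⟨by lia, hK⟩ ⟨le_rfl, by lia⟩
      (fun l hl => (hγ l hl.1 hl.2).ne') (fun l hl => (hγ' l hl.1 hl.2).ne') hc
      (hc2.trans hc2'.symm) (hγ1.trans hγ1'.symm)
      (fun k hk l hl => hagree k l hk.1 hk.2 hl.1 hl.2)
end

section
/- (Identification under CL(2).) Fix an integer K ≥ 3. Let (c₂,…,c_K, δ₁,…,δ_K, β₁,…,β_K, σ₁,…,σ_K, ρ) and (c'₂,…,c'_K, δ'₁,…,δ'_K, β'₁,…,β'_K, σ'₁,…,σ'_K, ρ') be two parameter vectors with σ_l > 0, σ'_l > 0 for all l, |ρ| < 1, |ρ'| < 1, strictly increasing thresholds c₂ < c₃ < ⋯ < c_K, and β₁ > 0, β'₁ > 0. Define γ_l = √(σ_l² + β_l²·(1−ρ²)) and γ'_l = √(σ'_l² + β'_l²·(1−ρ'²)), and impose the identifying constraints c₂ = c'₂ = 0 and γ₁ = γ'₁ = 1. Suppose there exists ε ∈ {−1, 1}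 such that for all k ∈ {2,…,K} and all l ∈ {1,…,K}: (c_k − δ_l)/γ_l = (c'_k − δ'_l)/γ'_l, (c_k − δ_l)/σ_l = (c'_k − δ'_l)/σ'_l, β_l·ρ/γ_l = ε·β'_l·ρ'/γ'_l, and β_l/σ_l = ε·β'_l/σ'_l. Then the two parameter vectors are equal: c_k = c'_k for all k ∈ {2,…,K}, δ_l = δ'_l, β_l = β'_l, σ_l = σ'_l for all l ∈ {1,…,K}, and ρ = ρ'. -/
/-!
A location-scale map `x ↦ (x - d) / s` is determined by its values at two distinct points. Fixing
the threshold `c₂` and the scale `γ₁` therefore propagates: the first family at `l = 1` pins down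
all thresholds, then the second family evaluated at `c₂ ≠ c₃` pins down each `(δ_l, σ_l)`, and the
fourth gives `β_l = ε β'_l`. The unknown factor `ε` cancels from `β₁ρ = ε β'₁ρ'`, so `ρ` is
determined whatever the sign of the factor, and positivity of `β₁` and `β'₁` forces `ε = 1`.
-/

section DivisionRing

variable {F : Type*} [DivisionRing F]

theorem location_scale_ext {x y d d' s s' : F} (hxy : x ≠ y) (hs : s ≠ 0)
    (hx : (x - d) / s = (x - d') / s') (hy : (y - d) / s = (y - d') / s') :
    d = d' ∧ s = s' := by
  have hslope : (x - y) / s = (x - y) / s' :=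
    calc (x - y) / s = (x - d) / s - (y - d) / s := by rw [← sub_div, sub_sub_sub_cancel_right]
      _ = (x - d') / s' - (y - d') / s' := by rw [hx, hy]
      _ = (x - y) / s' := by rw [← sub_div, sub_sub_sub_cancel_right]
  simp only [div_eq_mul_inv] at hslope
  obtain rfl : s = s' := inv_injective (mul_left_cancel₀ (sub_ne_zero.2 hxy) hslope)
  exact ⟨sub_right_injective ((div_left_inj' hs).1 hx), rfl⟩

theorem eq_of_sub_div_eq_sub_div {x y y' d d' s : F} (hs : s ≠ 0)
    (hx : (x - d) / s = (x - d') / s) (hy : (y - d) / s = (y' - d') / s) : y = y' := by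
  obtain rfl : d = d' := sub_right_injective ((div_left_inj' hs).1 hx)
  exact sub_left_injective ((div_left_inj' hs).1 hy)

theorem eq_mul_of_div_eq_mul_div {a b s ε : F} (hs : s ≠ 0) (h : a / s = ε * (b / s)) :
    a = ε * b := by
  rwa [← mul_div_assoc, div_left_inj' hs] at h

/-- Here `γ` is the common value of `γ_l₀` and `γ'_l₀`. -/
theorem cl2_identification_general {κ ι : Type*} {S : Set κ} {T : Set ι} {k₀ k₁ : κ} {l₀ : ι}
    {c c' : κ → F} {δ δ' β β' σ σ' : ι → F} {ρ ρ' γ ε : F}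
    (hk₀ : k₀ ∈ S) (hk₁ : k₁ ∈ S) (hl₀ : l₀ ∈ T)
    (hc₀ : c k₀ = c' k₀) (hc₁ : c k₀ ≠ c k₁)
    (hσ : ∀ l ∈ T, σ l ≠ 0) (hβ : β l₀ ≠ 0) (hγ : γ ≠ 0)
    (hcγ : ∀ k ∈ S, (c k - δ l₀) / γ = (c' k - δ' l₀) / γ)
    (hcσ : ∀ k ∈ S, ∀ l ∈ T, (c k - δ l) / σ l = (c' k - δ' l) / σ' l)
    (hβγ : β l₀ * ρ / γ = ε * (β' l₀ * ρ' / γ))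
    (hβσ : ∀ l ∈ T, β l / σ l = ε * (β' l / σ' l)) :
    (∀ k ∈ S, c k = c' k) ∧ (∀ l ∈ T, δ l = δ' l) ∧ (∀ l ∈ T, β l = ε * β' l) ∧
      (∀ l ∈ T, σ l = σ' l) ∧ ρ = ρ' := by
  have hc : ∀ k ∈ S, c k = c' k := fun k hk =>
    eq_of_sub_div_eq_sub_div hγ (by simpa only [hc₀] using hcγ k₀ hk₀) (hcγ k hk)
  have hδσ : ∀ l ∈ T, δ l = δ' l ∧ σ l = σ' l := fun l hl =>
    location_scale_ext hc₁ (hσ l hl)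
      (by simpa only [hc₀] using hcσ k₀ hk₀ l hl)
      (by simpa only [hc k₁ hk₁] using hcσ k₁ hk₁ l hl)
  have hβε : ∀ l ∈ T, β l = ε * β' l := fun l hl =>
    eq_mul_of_div_eq_mul_div (hσ l hl) ((hδσ l hl).2 ▸ hβσ l hl)
  have hρ : β l₀ * ρ = β l₀ * ρ' :=
    calc β l₀ * ρ = ε * (β' l₀ * ρ') := eq_mul_of_div_eq_mul_div hγ hβγ
      _ = β l₀ * ρ' := by rw [← mul_assoc, ← hβε l₀ hl₀]
  exact ⟨hc, fun l hl => (hδσ l hl).1, hβε, fun l hl => (hδσ l hl).2, mul_left_cancel₀ hβ hρ⟩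

end DivisionRing

theorem eq_one_of_pos_of_eq_mul {R : Type*} [Ring R] [PartialOrder R] [IsOrderedAddMonoid R]
    {a b ε : R} (hε : ε = -1 ∨ ε = 1) (ha : 0 < a) (hb : 0 ≤ b) (h : a = ε * b) : ε = 1 := by
  refine hε.resolve_left ?_
  rintro rfl
  rw [neg_one_mul] at h
  exact ha.not_ge (h.trans_le (neg_nonpos.2 hb))

/-- **Identification under CL(2).** Under the normalization `c₂ = 0`,
`γ₁ = 1` (with `γ_l = √(σ_l² + β_l²(1−ρ²))`) and the sign restriction `β₁ > 0`, the
identifying functions `(c_k − δ_l)/γ_l`, `(c_k − δ_l)/σ_l`, `ε·β_l·ρ/γ_l`, `ε·β_l/σ_l`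
of the CL(2) composite likelihood determine all parameters of the stochastic factor
ordered Probit migration model. -/
theorem cl2_identification
    (K : ℕ) (hK : 3 ≤ K)
    (c δ β σ : ℕ → ℝ) (ρ : ℝ)
    (c' δ' β' σ' : ℕ → ℝ) (ρ' : ℝ)
    (hσ : ∀ l, 1 ≤ l → l ≤ K → 0 < σ l)
    (hσ' : ∀ l, 1 ≤ l → l ≤ K → 0 < σ' l)
    (hρ : |ρ| < 1) (hρ' : |ρ'| < 1)
    (hcmono : ∀ k, 2 ≤ k → k < K → c k < c (k + 1))
    (hβ1 : 0 < β 1) (hβ1' : 0 < β' 1)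
    (γ γ' : ℕ → ℝ)
    (hγ : ∀ l, γ l = Real.sqrt (σ l ^ 2 + β l ^ 2 * (1 - ρ ^ 2)))
    (hγ' : ∀ l, γ' l = Real.sqrt (σ' l ^ 2 + β' l ^ 2 * (1 - ρ' ^ 2)))
    (hc2 : c 2 = 0) (hc2' : c' 2 = 0)
    (hγ1 : γ 1 = 1) (hγ1' : γ' 1 = 1)
    (ε : ℝ) (hε : ε = -1 ∨ ε = 1)
    (hagree1 : ∀ k l, 2 ≤ k → k ≤ K → 1 ≤ l → l ≤ K →
      (c k - δ l) / γ l = (c' k - δ' l) / γ' l)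
    (hagree2 : ∀ k l, 2 ≤ k → k ≤ K → 1 ≤ l → l ≤ K →
      (c k - δ l) / σ l = (c' k - δ' l) / σ' l)
    (hagree3 : ∀ l, 1 ≤ l → l ≤ K →
      β l * ρ / γ l = ε * (β' l * ρ' / γ' l))
    (hagree4 : ∀ l, 1 ≤ l → l ≤ K →
      β l / σ l = ε * (β' l / σ' l)) :
    (∀ k, 2 ≤ k → k ≤ K → c k = c' k) ∧
      (∀ l, 1 ≤ l → l ≤ K → δ l = δ' l) ∧
      (∀ l, 1 ≤ l → l ≤ K → β l = β' l) ∧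
      (∀ l, 1 ≤ l → l ≤ K → σ l = σ' l) ∧
      ρ = ρ' := by
  have h1 : 1 ∈ Set.Icc 1 K := ⟨le_rfl, by lia⟩
  have h2 : 2 ∈ Set.Icc 2 K := ⟨le_rfl, by lia⟩
  have h3 : 3 ∈ Set.Icc 2 K := ⟨by lia, hK⟩
  obtain rfl : ε = 1 :=
    eq_one_of_pos_of_eq_mul hε (div_pos hβ1 (hσ 1 h1.1 h1.2))
      (div_pos hβ1' (hσ' 1 h1.1 h1.2)).le (hagree4 1 h1.1 h1.2)
  simpa only [Set.mem_Icc, and_imp, one_mul] using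
    cl2_identification_general (γ := 1) h2 h3 h1 (hc2.trans hc2'.symm)
      (hcmono 2 le_rfl hK).ne (fun l hl => (hσ l hl.1 hl.2).ne') hβ1.ne' one_ne_zero
      (fun k hk => by simpa only [hγ1, hγ1'] using hagree1 k 1 hk.1 hk.2 h1.1 h1.2)
      (fun k hk l hl => hagree2 k l hk.1 hk.2 hl.1 hl.2)
      (by simpa only [hγ1, hγ1'] using hagree3 1 h1.1 h1.2)
      (fun l hl => hagree4 l hl.1 hl.2)
end
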